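/- Fix a real number π with 0 < π < 1, and let f' : [0,1] × [0,1] → ℝ be a function such that f'(r, π·r / (1 − π + π·r)) = 0 for all r ∈ [0,1], f' is nondecreasing in its first argument for every fixed value of the second, and f' is nondecreasing in its second argument for every fixed value of the first. Then f'(r, p) = 0 for every (r, p) ∈ [0,1] × [0,1] with π·r / (1 − π + π·r) ≤ p ≤ π. -/

import Mathlib

theorem eq_of_forall_graph_eq_of_mem_Icc {α β γ : Type*} [Preorder α] [Preorder β]
    [PartialOrder γ] {s : Set α} {t : Set β} {f : α → β → γ} {g : α → β} {a x : α} {y : β} {c : γ}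
    (hf_left : ∀ y ∈ t, MonotoneOn (fun x ↦ f x y) s) (hf_right : ∀ x ∈ s, MonotoneOn (f x) t)
    (hg : Set.MapsTo g s t) (hfg : ∀ x ∈ s, f x (g x) = c) (ha : IsGreatest s a)
    (hx : x ∈ s) (hy : y ∈ t) (hgy : y ∈ Set.Icc (g x) (g a)) : f x y = c := by
  apply le_antisymm
  · calc
      f x y ≤ f a y := hf_left y hy hx ha.1 (ha.2 hx)
      _ ≤ f a (g a) := hf_right a ha.1 hy (hg ha.1) hgy.2
      _ = c := hfg a ha.1
  · calc
      c = f x (g x) := (hfg x hx).symm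
      _ ≤ f x y := hf_right x hx (hg hx) hy hgy.1

section MinPrecision

variable {K : Type*} [Field K]

/-- The minimum precision curve in PR space: the least precision attainable at recall `r` when a
fraction `π` of the examples is positive. The quotient is `0 / 0` only when `π = 1` and `r = 0`,
for `π` and `r` in the unit interval. -/
def minPrecision (π r : K) : K := π * r / (1 - π + π * r)

theorem minPrecision_one_right (π : K) : minPrecision π 1 = π := by
  simp [minPrecision]

theorem minPrecision_mem_Icc [LinearOrder K] [IsStrictOrderedRing K] {π r : K}
    (hπ₀ : 0 ≤ π) (hπ₁ : π ≤ 1) (hr : 0 ≤ r) : minPrecision π r ∈ Set.Icc 0 1 := by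
  have num_nonneg : 0 ≤ π * r := mul_nonneg hπ₀ hr
  have num_le_den : π * r ≤ 1 - π + π * r := le_add_of_nonneg_left (sub_nonneg.2 hπ₁)
  have den_nonneg : 0 ≤ 1 - π + π * r := num_nonneg.trans num_le_den
  exact ⟨div_nonneg num_nonneg den_nonneg, div_le_one_of_le₀ num_le_den den_nonneg⟩

end MinPrecision

-- The endpoint `(1, π)` of the minimum precision curve dominates every `(r, p)` with `p ≤ π`, so
-- each such point above the curve is squeezed between two points of the curve.
theorem modified_f1_vanishes_below_random_general {K γ : Type*} [Field K] [LinearOrder K]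
    [IsStrictOrderedRing K] [PartialOrder γ] {π : K} (hπ₀ : 0 ≤ π) (hπ₁ : π < 1)
    {f : K → K → γ} {c : γ}
    (hf_curve : ∀ r ∈ Set.Icc (0 : K) 1, f r (minPrecision π r) = c)
    (hf_recall : ∀ p ∈ Set.Icc (0 : K) 1, MonotoneOn (fun r ↦ f r p) (Set.Icc 0 1))
    (hf_precision : ∀ r ∈ Set.Icc (0 : K) 1, MonotoneOn (f r) (Set.Icc 0 1))
    {r p : K} (hr : r ∈ Set.Icc 0 1) (hp : p ∈ Set.Icc 0 1)
    (hrp : minPrecision π r ≤ p) (hpπ : p ≤ π) : f r p = c :=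
  eq_of_forall_graph_eq_of_mem_Icc hf_recall hf_precision
    (fun _ hz ↦ minPrecision_mem_Icc hπ₀ hπ₁.le hz.1) hf_curve (isGreatest_Icc zero_le_one)
    hr hp ⟨hrp, hpπ.trans_eq (minPrecision_one_right π).symm⟩

/-- If a modified F1 score vanishes on the minimum precision curve and is
nondecreasing in each argument, then it vanishes at every point (r, p) of
[0,1] × [0,1] with π·r/(1−π+π·r) ≤ p ≤ π. -/
theorem modified_f1_vanishes_below_random
    (π : ℝ) (h0 : 0 < π) (h1 : π < 1) (f' : ℝ → ℝ → ℝ)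
    (hcurve : ∀ r ∈ Set.Icc (0:ℝ) 1, f' r (π * r / (1 - π + π * r)) = 0)
    (hmono_r : ∀ p ∈ Set.Icc (0:ℝ) 1, ∀ r₁ ∈ Set.Icc (0:ℝ) 1, ∀ r₂ ∈ Set.Icc (0:ℝ) 1,
      r₁ ≤ r₂ → f' r₁ p ≤ f' r₂ p)
    (hmono_p : ∀ r ∈ Set.Icc (0:ℝ) 1, ∀ p₁ ∈ Set.Icc (0:ℝ) 1, ∀ p₂ ∈ Set.Icc (0:ℝ) 1,
      p₁ ≤ p₂ → f' r p₁ ≤ f' r p₂) :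
    ∀ r ∈ Set.Icc (0:ℝ) 1, ∀ p ∈ Set.Icc (0:ℝ) 1,
      π * r / (1 - π + π * r) ≤ p → p ≤ π → f' r p = 0 := by
  intro r hr p hp
  exact modified_f1_vanishes_below_random_general h0.le h1 hcurve
    (fun p hp _ hr₁ _ hr₂ ↦ hmono_r p hp _ hr₁ _ hr₂)
    (fun r hr _ hp₁ _ hp₂ ↦ hmono_p r hr _ hp₁ _ hp₂) hr hp
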